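/- Let u, u* be AB-entropy solutions of u_t + f(x,u)_x = 0 on ℝ × [0,T], let x ∈ ℝ, and let ζ ∈ C(u*, x). Then F_t(ζ, u) ≥ F_t(ζ, u*) for every t ∈ [0,T]. -/

import Mathlib

open MeasureTheory Set Filter

noncomputable section

/-- The discontinuous flux `f(x,u) = f_l(u)` for `x < 0`, `f_r(u)` for `x > 0`
(the value at the interface is taken to be `f_r(u)`). -/
def dflux (fl fr : ℝ → ℝ) (x u : ℝ) : ℝ := if x < 0 then fl u else fr u

/-- The connection function `c^{AB}`. -/
def cAB (A B : ℝ) (x : ℝ) : ℝ := if x ≤ 0 then A else B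

/-- An `AB`-entropy solution of `u_t + f(x,u)_x = 0` on `ℝ × [0,∞)` with
initial datum `u0`, for the flux `f(x,·) = fl` on `x<0` and `fr` on `x>0`,
relative to the connection `(A,B)`.  The structure bundles the solution `u`
(as a function of `(x,t)`), its one-sided spatial limits `um x t = u(x-,t)` and
`up x t = u(x+,t)` (for `t > 0`), the weak (distributional) formulation, the
Kružkov entropy inequalities away from the interface, the `AB`-interface
entropy inequality, `L¹_loc`-continuity in time and the initial condition. -/
structure ABSol (fl fr : ℝ → ℝ) (A B : ℝ) (u0 : ℝ → ℝ) where
  u : ℝ → ℝ → ℝ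
  meas : Measurable (Function.uncurry u)
  bdd : ∃ M : ℝ, ∀ x t, |u x t| ≤ M
  um : ℝ → ℝ → ℝ
  up : ℝ → ℝ → ℝ
  um_spec : ∀ x t, 0 < t →
    Tendsto (fun y => u y t) (nhdsWithin x (Iio x)) (nhds (um x t))
  up_spec : ∀ x t, 0 < t →
    Tendsto (fun y => u y t) (nhdsWithin x (Ioi x)) (nhds (up x t))
  weak : ∀ φ : ℝ → ℝ → ℝ,
    ContDiff ℝ 1 (fun p : ℝ × ℝ => φ p.1 p.2) →
    HasCompactSupport (fun p : ℝ × ℝ => φ p.1 p.2) →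
    (∀ x t, t ≤ 0 → φ x t = 0) →
    (∫ p : ℝ × ℝ, (u p.1 p.2 * deriv (fun s => φ p.1 s) p.2 +
        dflux fl fr p.1 (u p.1 p.2) * deriv (fun y => φ y p.2) p.1)) = 0
  kruzkov_l : ∀ (k : ℝ) (φ : ℝ → ℝ → ℝ),
    ContDiff ℝ 1 (fun p : ℝ × ℝ => φ p.1 p.2) →
    HasCompactSupport (fun p : ℝ × ℝ => φ p.1 p.2) →
    (∀ x t, 0 ≤ φ x t) →
    (∀ x t, 0 ≤ x ∨ t ≤ 0 → φ x t = 0) →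
    0 ≤ ∫ p : ℝ × ℝ, (|u p.1 p.2 - k| * deriv (fun s => φ p.1 s) p.2 +
        Real.sign (u p.1 p.2 - k) * (fl (u p.1 p.2) - fl k) *
          deriv (fun y => φ y p.2) p.1)
  kruzkov_r : ∀ (k : ℝ) (φ : ℝ → ℝ → ℝ),
    ContDiff ℝ 1 (fun p : ℝ × ℝ => φ p.1 p.2) →
    HasCompactSupport (fun p : ℝ × ℝ => φ p.1 p.2) →
    (∀ x t, 0 ≤ φ x t) →
    (∀ x t, x ≤ 0 ∨ t ≤ 0 → φ x t = 0) →
    0 ≤ ∫ p : ℝ × ℝ, (|u p.1 p.2 - k| * deriv (fun s => φ p.1 s) p.2 +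
        Real.sign (u p.1 p.2 - k) * (fr (u p.1 p.2) - fr k) *
          deriv (fun y => φ y p.2) p.1)
  interfaceEntropy : ∀ φ : ℝ → ℝ → ℝ,
    ContDiff ℝ 1 (fun p : ℝ × ℝ => φ p.1 p.2) →
    HasCompactSupport (fun p : ℝ × ℝ => φ p.1 p.2) →
    (∀ x t, 0 ≤ φ x t) →
    (∀ x t, t ≤ 0 → φ x t = 0) →
    0 ≤ ∫ p : ℝ × ℝ, (|u p.1 p.2 - cAB A B p.1| * deriv (fun s => φ p.1 s) p.2 +
        Real.sign (u p.1 p.2 - cAB A B p.1) *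
          (dflux fl fr p.1 (u p.1 p.2) - dflux fl fr p.1 (cAB A B p.1)) *
          deriv (fun y => φ y p.2) p.1)
  timeCont : ∀ (r t₀ : ℝ), 0 ≤ t₀ →
    Tendsto (fun t => ∫ x in Icc (-r) r, |u x t - u x t₀|)
      (nhdsWithin t₀ (Ici 0)) (nhds 0)
  init : ∀ᵐ x : ℝ ∂volume, u x 0 = u0 x

/-- `AB`-genuine/interface characteristic for the `AB`-entropy solution `sol`,
on the time interval `[0,T]`, where `γ = f_l(A) = f_r(B)`. -/
def IsABgic (T : ℝ) (fl fr : ℝ → ℝ) (γ : ℝ) {A B : ℝ} {u0 : ℝ → ℝ}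
    (sol : ABSol fl fr A B u0) (ζ : ℝ → ℝ) : Prop :=
  (∃ K : NNReal, LipschitzOnWith K ζ (Icc 0 T)) ∧
  (∀ᵐ t ∂(volume.restrict (Icc 0 T)),
    (ζ t < 0 → HasDerivAt ζ (deriv fl (sol.um (ζ t) t)) t ∧
      deriv fl (sol.um (ζ t) t) = deriv fl (sol.up (ζ t) t)) ∧
    (0 < ζ t → HasDerivAt ζ (deriv fr (sol.um (ζ t) t)) t ∧
      deriv fr (sol.um (ζ t) t) = deriv fr (sol.up (ζ t) t)) ∧
    (ζ t = 0 → fl (sol.um 0 t) = γ ∧ fr (sol.up 0 t) = γ))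

/-- `C(u,x)`: the set of `AB`-genuine/interface characteristics of `sol`
reaching `x` at time `T`. -/
def charSet (T : ℝ) (fl fr : ℝ → ℝ) (γ : ℝ) {A B : ℝ} {u0 : ℝ → ℝ}
    (sol : ABSol fl fr A B u0) (x : ℝ) : Set (ℝ → ℝ) :=
  {ζ | IsABgic T fl fr γ sol ζ ∧ ζ T = x}

/-- `C₀(u,x)`: the set of initial positions `ζ(0)` of characteristics in `C(u,x)`. -/
def charSet0 (T : ℝ) (fl fr : ℝ → ℝ) (γ : ℝ) {A B : ℝ} {u0 : ℝ → ℝ}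
    (sol : ABSol fl fr A B u0) (x : ℝ) : Set ℝ :=
  (fun ζ : ℝ → ℝ => ζ 0) '' charSet T fl fr γ sol x

/-- Membership in `L^∞(ℝ)`: measurable and (essentially) bounded. -/
def IsLinf (g : ℝ → ℝ) : Prop :=
  Measurable g ∧ ∃ M : ℝ, ∀ᵐ x : ℝ ∂volume, |g x| ≤ M

/-- `ω ∈ A^{[AB]}(T)`: the profile `ω` is attainable at time `T`. -/
def Attainable (T : ℝ) (fl fr : ℝ → ℝ) (A B : ℝ) (ω : ℝ → ℝ) : Prop :=
  ∃ u0 : ℝ → ℝ, IsLinf u0 ∧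
    ∃ sol : ABSol fl fr A B u0, ∀ᵐ x : ℝ ∂volume, sol.u x T = ω x

/-- `I_T^{[AB]}(ω)`: the set of (bounded) initial data whose `AB`-entropy
solution coincides a.e. with `ω` at time `T`. -/
def InitialSet (T : ℝ) (fl fr : ℝ → ℝ) (A B : ℝ) (ω : ℝ → ℝ) : Set (ℝ → ℝ) :=
  {u0 | IsLinf u0 ∧
    ∃ sol : ABSol fl fr A B u0, ∀ᵐ x : ℝ ∂volume, sol.u x T = ω x}

/-- `x` is a point of continuity of `ω`: the one-sided limits exist and coincide. -/
def ContinuityPt (ω : ℝ → ℝ) (x : ℝ) : Prop :=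
  ∃ l : ℝ, Tendsto ω (nhdsWithin x (Iio x)) (nhds l) ∧
    Tendsto ω (nhdsWithin x (Ioi x)) (nhds l)

/-- `F_t(α−, sol)`: the total flux of the field `(f(x,u), u)` through the curve
`s ↦ (α(s), s)`, `s ∈ [t,T]`, computed with the left traces of `sol`. -/
def Fminus (fl fr : ℝ → ℝ) (T : ℝ) {A B : ℝ} {u0 : ℝ → ℝ}
    (sol : ABSol fl fr A B u0) (t : ℝ) (α : ℝ → ℝ) : ℝ :=
  ∫ s in t..T,
    ((if α s ≤ 0 then fl (sol.um (α s) s) else fr (sol.um (α s) s)) -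
      deriv α s * sol.um (α s) s)

/-- `F_t(α+, sol)`: the total flux of the field `(f(x,u), u)` through the curve
`s ↦ (α(s), s)`, `s ∈ [t,T]`, computed with the right traces of `sol`. -/
def Fplus (fl fr : ℝ → ℝ) (T : ℝ) {A B : ℝ} {u0 : ℝ → ℝ}
    (sol : ABSol fl fr A B u0) (t : ℝ) (α : ℝ → ℝ) : ℝ :=
  ∫ s in t..T,
    ((if α s < 0 then fl (sol.up (α s) s) else fr (sol.up (α s) s)) -
      deriv α s * sol.up (α s) s)

/-! The integrand of `F_t(ζ+, ·)` for `u` dominates the one for `u*` at almost every time. Where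
`ζ ≠ 0` the slope `ζ'` equals `f'(u*)`, so the claim is that the convex flux lies above its tangent
at `u*`. Almost everywhere on `{ζ = 0}` the slope `ζ'` vanishes and the flux of `u*` equals `γ`, so
the claim is that an `AB`-entropy solution has flux at least `γ` through the interface.

For the latter, testing a balance inequality `P_t + G_x ≤ 0` with `η(x/ε) ψ(t)` and letting `ε → 0`
shows that `G` does not increase across `x = 0`. Applied to the equation itself this is the
Rankine–Hugoniot condition `f_l(u(0-,t)) = f_r(u(0+,t))`; applied to the interface entropy it
excludes `u(0-,t) > A` together with `u(0+,t) < B`. On the remaining half-lines `γ` is the minimum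
of the respective flux. -/

open scoped Topology ContDiff

section Convex

variable {S : Set ℝ} {f : ℝ → ℝ} {f' x y : ℝ}

theorem tangent_le_of_convexOn (hf : ConvexOn ℝ S f) (hx : x ∈ S) (hy : y ∈ S)
    (hfx : HasDerivAt f f' x) : f x + f' * (y - x) ≤ f y := by
  rcases lt_trichotomy x y with hxy | rfl | hyx
  · have h := hf.le_slope_of_hasDerivAt hx hy hxy hfx
    rw [slope_def_field, le_div_iff₀ (sub_pos.2 hxy)] at h
    linarith
  · simp
  · have h := hf.slope_le_of_hasDerivAt hy hx hyx hfx
    rw [slope_def_field, div_le_iff₀ (sub_pos.2 hyx)] at h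
    linarith

theorem isMinOn_inter_Iic_of_convexOn (hf : ConvexOn ℝ S f) (hx : x ∈ S)
    (hfx : HasDerivAt f f' x) (hf' : f' ≤ 0) : IsMinOn f (S ∩ Iic x) x := fun y hy => by
  have h := tangent_le_of_convexOn hf hx hy.1 hfx
  have h' := mul_nonneg_of_nonpos_of_nonpos hf' (sub_nonpos.2 hy.2)
  simp only [mem_ofPred_eq]
  linarith

theorem isMinOn_inter_Ici_of_convexOn (hf : ConvexOn ℝ S f) (hx : x ∈ S)
    (hfx : HasDerivAt f f' x) (hf' : 0 ≤ f') : IsMinOn f (S ∩ Ici x) x := fun y hy => by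
  have h := tangent_le_of_convexOn hf hx hy.1 hfx
  have h' := mul_nonneg hf' (sub_nonneg.2 hy.2)
  simp only [mem_ofPred_eq]
  linarith

end Convex

theorem ae_deriv_eq_zero_of_eq {F : Type*} [NormedAddCommGroup F] [NormedSpace ℝ F]
    (f : ℝ → F) (c : F) : ∀ᵐ s, f s = c → deriv f s = 0 := by
  filter_upwards [(countable_setOfPred_isolated_right_within (s := f ⁻¹' {c})).ae_notMem volume]
    with s hs hfs
  by_cases hd : DifferentiableAt ℝ f s
  · have hacc : AccPt s (𝓟 (f ⁻¹' {c})) :=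
      accPt_principal_iff_nhdsWithin.2 <|
        (show (𝓝[f ⁻¹' {c} ∩ Ioi s] s).NeBot from ⟨fun h => hs ⟨hfs, h⟩⟩).mono <|
          nhdsWithin_mono _ fun y hy => ⟨hy.1, ne_of_gt hy.2⟩
    have hconst : HasDerivWithinAt f 0 (f ⁻¹' {c}) s :=
      (hasDerivWithinAt_const s _ c).congr (fun y hy => hy) hfs
    exact (uniqueDiffWithinAt_iff_accPt.2 hacc).eq_deriv _ hd.hasDerivAt.hasDerivWithinAt hconst
  · exact deriv_zero_of_not_differentiableAt hd

theorem ae_nonneg_of_forall_integral_contDiff_mul_nonneg {E : Type*} [NormedAddCommGroup E]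
    [NormedSpace ℝ E] [FiniteDimensional ℝ E] [MeasurableSpace E] [BorelSpace E] {μ : Measure E}
    [μ.IsAddHaarMeasure] {U : Set E} (hU : IsOpen U) {f : E → ℝ} (hf : LocallyIntegrable f μ)
    (h : ∀ ψ : E → ℝ, ContDiff ℝ ∞ ψ → HasCompactSupport ψ → (∀ x, 0 ≤ ψ x) → tsupport ψ ⊆ U →
      0 ≤ ∫ x, ψ x * f x ∂μ) :
    ∀ᵐ x ∂μ, x ∈ U → 0 ≤ f x := by
  let b (n : ℕ) : ContDiffBump (0 : E) :=
    ⟨1 / (n + 1), 2 * (1 / (n + 1)), by positivity, lt_two_mul_self (by positivity)⟩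
  have hb : Tendsto (fun n => (b n).rOut) atTop (𝓝 0) := by
    simpa only [mul_zero] using (tendsto_one_div_add_atTop_nhds_zero_nat (𝕜 := ℝ)).const_mul 2
  filter_upwards [ContDiffBump.ae_convolution_tendsto_right_of_locallyIntegrable hb
    (Eventually.of_forall fun _ => le_rfl) hf] with x hx hxU
  obtain ⟨r, hr, hrU⟩ := Metric.nhds_basis_closedBall.mem_iff.1 (hU.mem_nhds hxU)
  refine ge_of_tendsto hx ?_
  filter_upwards [hb.eventually_lt_const hr] with n hn
  have hsupp : tsupport (fun y => (b n).normed μ (x - y)) ⊆ Metric.closedBall x r := by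
    refine closure_minimal (fun y hy => ?_) Metric.isClosed_closedBall
    have hy' : x - y ∈ Function.support ((b n).normed μ) := hy
    rw [ContDiffBump.support_normed_eq, mem_ball_zero_iff] at hy'
    rw [Metric.mem_closedBall', dist_eq_norm]
    exact (hy'.trans hn).le
  rw [convolution_lsmul_swap]
  exact h _ ((b n).contDiff_normed.comp (contDiff_const.sub contDiff_id))
    (HasCompactSupport.of_support_subset_isCompact (isCompact_closedBall x r)
      ((subset_tsupport _).trans hsupp))
    (fun y => (b n).nonneg_normed _) (hsupp.trans hrU)

section Dilation

variable {κ ψ : ℝ → ℝ} {C : ℝ}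

theorem integral_mul_inv_mul_comp_inv_mul (g κ : ℝ → ℝ) {ε : ℝ} (hε : 0 < ε) :
    ∫ x, g x * (ε⁻¹ * κ (ε⁻¹ * x)) = ∫ y, g (ε * y) * κ y := by
  have h := Measure.integral_comp_mul_left (fun x => g x * (ε⁻¹ * κ (ε⁻¹ * x))) ε
  simp only [inv_mul_cancel_left₀ hε.ne', abs_of_pos (inv_pos.2 hε), smul_eq_mul,
    mul_left_comm _ ε⁻¹, integral_const_mul] at h ⊢
  exact (mul_left_cancel₀ (inv_ne_zero hε.ne') h).symm

theorem integral_abs_comp_inv_mul (η : ℝ → ℝ) {ε : ℝ} (hε : 0 < ε) :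
    ∫ x, |η (ε⁻¹ * x)| = ε * ∫ y, |η y| := by
  rw [Measure.integral_comp_mul_left (fun x => |η x|), inv_inv, abs_of_pos hε, smul_eq_mul]

theorem tendsto_setIntegral_comp_mul_mul {g : ℝ → ℝ} {S : Set ℝ} {c : ℝ} (hg : Measurable g)
    (hgC : ∀ x, |g x| ≤ C) (hκ : Integrable κ) (hS : MeasurableSet S)
    (hlim : ∀ y ∈ S, Tendsto (fun ε => g (ε * y)) (𝓝[>] 0) (𝓝 c)) :
    Tendsto (fun ε => ∫ y in S, g (ε * y) * κ y) (𝓝[>] 0) (𝓝 (c * ∫ y in S, κ y)) := by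
  rw [← integral_const_mul]
  refine tendsto_integral_filter_of_dominated_convergence (fun y => C * |κ y|)
    (Eventually.of_forall fun ε => ?_) (Eventually.of_forall fun ε => ?_)
    (hκ.abs.const_mul C).integrableOn ?_
  · exact (hg.comp (measurable_const_mul ε)).aestronglyMeasurable.mul hκ.1.restrict
  · filter_upwards with y
    rw [norm_mul]
    exact mul_le_mul_of_nonneg_right (hgC _) (abs_nonneg _)
  · filter_upwards [ae_restrict_mem hS] with y hy
    exact (hlim y hy).mul_const _

theorem tendsto_integral_comp_mul_mul {g : ℝ → ℝ} {gl gr : ℝ} (hg : Measurable g)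
    (hgC : ∀ x, |g x| ≤ C) (hκ : Integrable κ) (hgl : Tendsto g (𝓝[<] 0) (𝓝 gl))
    (hgr : Tendsto g (𝓝[>] 0) (𝓝 gr)) :
    Tendsto (fun ε => ∫ y, g (ε * y) * κ y) (𝓝[>] 0)
      (𝓝 (gl * (∫ y in Iic 0, κ y) + gr * ∫ y in Ioi 0, κ y)) := by
  have hmul (y : ℝ) : Tendsto (fun ε => ε * y) (𝓝[>] 0) (𝓝 0) :=
    ((continuous_mul_const y).tendsto' 0 0 (zero_mul y)).mono_left nhdsWithin_le_nhds
  have hleft := tendsto_setIntegral_comp_mul_mul hg hgC hκ measurableSet_Iio fun y hy =>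
    hgl.comp <| tendsto_nhdsWithin_iff.2
      ⟨hmul y, eventually_mem_nhdsWithin.mono fun ε (hε : 0 < ε) =>
        mul_neg_of_pos_of_neg hε (mem_Iio.1 hy)⟩
  have hright := tendsto_setIntegral_comp_mul_mul hg hgC hκ measurableSet_Ioi fun y hy =>
    hgr.comp <| tendsto_nhdsWithin_iff.2
      ⟨hmul y, eventually_mem_nhdsWithin.mono fun ε (hε : 0 < ε) =>
        mul_pos hε (mem_Ioi.1 hy)⟩
  rw [integral_Iic_eq_integral_Iio]
  refine (hleft.add hright).congr fun ε => ?_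
  have hint : Integrable fun y => g (ε * y) * κ y :=
    hκ.bdd_mul (hg.comp (measurable_const_mul ε)).aestronglyMeasurable
      (Eventually.of_forall fun y => hgC _)
  rw [← integral_Iic_eq_integral_Iio, ← compl_Iic, integral_add_compl measurableSet_Iic hint]

variable {G : ℝ → ℝ → ℝ}

theorem integrable_mul_comp_mul_prod (hG : Measurable (Function.uncurry G))
    (hGC : ∀ x t, |G x t| ≤ C) (hκ : Integrable κ) (hψ : Integrable ψ) {c : ℝ} (hc : c ≠ 0) :
    Integrable fun p : ℝ × ℝ => G p.1 p.2 * (κ (c * p.1) * ψ p.2) :=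
  ((hκ.comp_mul_left' hc).mul_prod hψ).bdd_mul hG.aestronglyMeasurable
    (Eventually.of_forall fun _ => hGC _ _)

theorem tendsto_integral_mul_comp_inv_mul_prod_zero (hGC : ∀ x t, |G x t| ≤ C)
    (hκ : Integrable κ) (hψ : Integrable ψ) :
    Tendsto (fun ε => ∫ p : ℝ × ℝ, G p.1 p.2 * (κ (ε⁻¹ * p.1) * ψ p.2)) (𝓝[>] 0) (𝓝 0) := by
  have hbound : Tendsto (fun ε => C * (ε * (∫ x, |κ x|) * ∫ t, |ψ t|)) (𝓝[>] 0) (𝓝 0) :=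
    (Continuous.tendsto' (by fun_prop) 0 0 (by ring)).mono_left nhdsWithin_le_nhds
  refine squeeze_zero_norm' (eventually_mem_nhdsWithin.mono fun ε (hε : 0 < ε) => ?_) hbound
  rw [← integral_abs_comp_inv_mul κ hε, ← integral_prod_mul, ← integral_const_mul]
  refine norm_integral_le_of_norm_le
    (((hκ.comp_mul_left' (inv_ne_zero hε.ne')).abs.mul_prod hψ.abs).const_mul C)
    (Eventually.of_forall fun p => ?_)
  rw [norm_mul, norm_mul]
  exact mul_le_mul_of_nonneg_right (hGC _ _) (by positivity)

theorem tendsto_integral_mul_inv_mul_comp_inv_mul_prod {gl gr : ℝ → ℝ}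
    (hG : Measurable (Function.uncurry G)) (hGC : ∀ x t, |G x t| ≤ C) (hκ : Integrable κ)
    (hψ : Integrable ψ)
    (hgl : ∀ t ∈ Function.support ψ, Tendsto (fun x => G x t) (𝓝[<] 0) (𝓝 (gl t)))
    (hgr : ∀ t ∈ Function.support ψ, Tendsto (fun x => G x t) (𝓝[>] 0) (𝓝 (gr t))) :
    Tendsto (fun ε => ∫ p : ℝ × ℝ, G p.1 p.2 * ((ε⁻¹ * κ (ε⁻¹ * p.1)) * ψ p.2)) (𝓝[>] 0)
      (𝓝 (∫ t, (gl t * (∫ y in Iic 0, κ y) + gr t * ∫ y in Ioi 0, κ y) * ψ t)) := by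
  have hGt (t : ℝ) : Measurable fun x => G x t := hG.comp measurable_prodMk_right
  have hslice : ∀ ε > 0, ∀ t, ∫ x, G x t * ((ε⁻¹ * κ (ε⁻¹ * x)) * ψ t) =
      (∫ y, G (ε * y) t * κ y) * ψ t := fun ε hε t => by
    simp only [← integral_mul_inv_mul_comp_inv_mul (fun x => G x t) κ hε, ← integral_mul_const,
      mul_assoc]
  have hint : ∀ ε > 0, Integrable fun p : ℝ × ℝ =>
      G p.1 p.2 * ((ε⁻¹ * κ (ε⁻¹ * p.1)) * ψ p.2) := fun ε hε =>
    integrable_mul_comp_mul_prod (κ := fun x => ε⁻¹ * κ x) hG hGC (hκ.const_mul ε⁻¹) hψ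
      (inv_ne_zero hε.ne')
  have hmeas : ∀ ε > 0, AEStronglyMeasurable fun t => (∫ y, G (ε * y) t * κ y) * ψ t :=
    fun ε hε => by simpa only [hslice ε hε] using (hint ε hε).integral_prod_right.1
  have hfubini : ∀ ε > 0, ∫ t, (∫ y, G (ε * y) t * κ y) * ψ t =
      ∫ p : ℝ × ℝ, G p.1 p.2 * ((ε⁻¹ * κ (ε⁻¹ * p.1)) * ψ p.2) := fun ε hε => by
    simp only [← hslice ε hε]
    exact (integral_prod_symm _ (hint ε hε)).symm
  refine Tendsto.congr' (eventually_mem_nhdsWithin.mono hfubini) ?_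
  refine tendsto_integral_filter_of_dominated_convergence (fun t => (C * ∫ y, |κ y|) * |ψ t|)
    (eventually_mem_nhdsWithin.mono hmeas) (Eventually.of_forall fun ε => ?_)
    (hψ.abs.const_mul _) (Eventually.of_forall fun t => ?_)
  · filter_upwards with t
    rw [norm_mul, ← integral_const_mul]
    refine mul_le_mul_of_nonneg_right (norm_integral_le_of_norm_le (hκ.abs.const_mul C)
      (Eventually.of_forall fun y => ?_)) (abs_nonneg _)
    rw [norm_mul]
    exact mul_le_mul_of_nonneg_right (hGC _ _) (abs_nonneg _)
  · by_cases ht : ψ t = 0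
    · simp only [ht, mul_zero, tendsto_const_nhds_iff]
    · exact (tendsto_integral_comp_mul_mul (hGt t) (hGC · t) hκ (hgl t ht) (hgr t ht)).mul_const _

end Dilation

/-- The balance inequality `P_t + G_x ≤ 0` in the sense of distributions on `ℝ × (0,∞)`. The test
functions are those of the fields `ABSol.weak` and `ABSol.interfaceEntropy`. -/
def IsWeakSubsolution (P G : ℝ → ℝ → ℝ) : Prop :=
  ∀ φ : ℝ → ℝ → ℝ,
    ContDiff ℝ 1 (fun p : ℝ × ℝ => φ p.1 p.2) →
    HasCompactSupport (fun p : ℝ × ℝ => φ p.1 p.2) →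
    (∀ x t, 0 ≤ φ x t) →
    (∀ x t, t ≤ 0 → φ x t = 0) →
    0 ≤ ∫ p : ℝ × ℝ, (P p.1 p.2 * deriv (fun s => φ p.1 s) p.2 +
        G p.1 p.2 * deriv (fun y => φ y p.2) p.1)

namespace IsWeakSubsolution

variable {P G : ℝ → ℝ → ℝ} {gl gr η ψ : ℝ → ℝ} {C D : ℝ}

theorem integral_mul_nonneg (h : IsWeakSubsolution P G)
    (hη : ContDiff ℝ 1 η) (hηc : HasCompactSupport η) (hη0 : ∀ x, 0 ≤ η x)
    (hψ : ContDiff ℝ 1 ψ) (hψc : HasCompactSupport ψ) (hψ0 : ∀ t, 0 ≤ ψ t)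
    (hψ_nonpos : ∀ t ≤ 0, ψ t = 0) :
    0 ≤ ∫ p : ℝ × ℝ, (P p.1 p.2 * (η p.1 * deriv ψ p.2) + G p.1 p.2 * (deriv η p.1 * ψ p.2)) := by
  have hcompact : HasCompactSupport fun p : ℝ × ℝ => η p.1 * ψ p.2 :=
    .intro (hηc.isCompact.prod hψc.isCompact) fun p hp => by
      rcases not_and_or.1 (mt mem_prod.2 hp) with hp | hp <;>
        simp only [image_eq_zero_of_notMem_tsupport hp, zero_mul, mul_zero]
  simpa only [deriv_const_mul_field, deriv_mul_const_field] using
    h (fun x t => η x * ψ t) ((hη.comp contDiff_fst).mul (hψ.comp contDiff_snd)) hcompact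
      (fun x t => mul_nonneg (hη0 x) (hψ0 t)) fun x t ht => by rw [hψ_nonpos t ht, mul_zero]

theorem integral_mul_comp_inv_mul_add_nonneg (h : IsWeakSubsolution P G)
    (hP : Measurable (Function.uncurry P)) (hG : Measurable (Function.uncurry G))
    (hPC : ∀ x t, |P x t| ≤ C) (hGD : ∀ x t, |G x t| ≤ D)
    (hη : ContDiff ℝ 1 η) (hηc : HasCompactSupport η) (hη0 : ∀ x, 0 ≤ η x)
    (hψ : ContDiff ℝ 1 ψ) (hψc : HasCompactSupport ψ) (hψ0 : ∀ t, 0 ≤ ψ t)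
    (hψ_nonpos : ∀ t ≤ 0, ψ t = 0) {ε : ℝ} (hε : ε ≠ 0) :
    0 ≤ (∫ p : ℝ × ℝ, P p.1 p.2 * (η (ε⁻¹ * p.1) * deriv ψ p.2)) +
      ∫ p : ℝ × ℝ, G p.1 p.2 * ((ε⁻¹ * deriv η (ε⁻¹ * p.1)) * ψ p.2) := by
  have hε' : ε⁻¹ ≠ 0 := inv_ne_zero hε
  have hη_int : Integrable η := hη.continuous.integrable_of_hasCompactSupport hηc
  have hη'_int : Integrable (deriv η) :=
    hη.continuous_deriv_one.integrable_of_hasCompactSupport hηc.deriv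
  have hψ_int : Integrable ψ := hψ.continuous.integrable_of_hasCompactSupport hψc
  have hψ'_int : Integrable (deriv ψ) :=
    hψ.continuous_deriv_one.integrable_of_hasCompactSupport hψc.deriv
  have hscaled : HasCompactSupport fun x => η (ε⁻¹ * x) :=
    hηc.comp_homeomorph (Homeomorph.mulLeft₀ ε⁻¹ hε')
  have hderiv (x : ℝ) : deriv (fun y => η (ε⁻¹ * y)) x = ε⁻¹ * deriv η (ε⁻¹ * x) :=
    deriv_comp_mul_left ε⁻¹ η x
  rw [← integral_add (integrable_mul_comp_mul_prod hP hPC hη_int hψ'_int hε')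
    (integrable_mul_comp_mul_prod (κ := fun x => ε⁻¹ * deriv η x) hG hGD
      (hη'_int.const_mul ε⁻¹) hψ_int hε')]
  simpa only [hderiv] using
    h.integral_mul_nonneg (η := fun x => η (ε⁻¹ * x))
      (hη.comp (contDiff_const.mul contDiff_id)) hscaled (fun x => hη0 _) hψ hψc hψ0 hψ_nonpos

theorem integral_mul_trace_sub_nonneg (h : IsWeakSubsolution P G)
    (hP : Measurable (Function.uncurry P)) (hG : Measurable (Function.uncurry G))
    (hPC : ∀ x t, |P x t| ≤ C) (hGD : ∀ x t, |G x t| ≤ D)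
    (hgl : ∀ t, 0 < t → Tendsto (fun x => G x t) (𝓝[<] 0) (𝓝 (gl t)))
    (hgr : ∀ t, 0 < t → Tendsto (fun x => G x t) (𝓝[>] 0) (𝓝 (gr t)))
    (hψ : ContDiff ℝ 1 ψ) (hψc : HasCompactSupport ψ) (hψ0 : ∀ t, 0 ≤ ψ t)
    (hψ_nonpos : ∀ t ≤ 0, ψ t = 0) :
    0 ≤ ∫ t, ψ t * (gl t - gr t) := by
  obtain ⟨b⟩ : Nonempty (ContDiffBump (0 : ℝ)) := inferInstance
  obtain ⟨η, hη, hηc, hη0, hη_zero⟩ : ∃ η : ℝ → ℝ,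
      ContDiff ℝ 1 η ∧ HasCompactSupport η ∧ (∀ x, 0 ≤ η x) ∧ η 0 = 1 :=
    ⟨b, b.contDiff, b.hasCompactSupport, fun x => b.nonneg,
      b.one_of_mem_closedBall (Metric.mem_closedBall_self b.rIn_pos.le)⟩
  have hpos : ∀ t ∈ Function.support ψ, 0 < t := fun t ht =>
    lt_of_not_ge fun ht' => ht (hψ_nonpos t ht')
  have hlim := (tendsto_integral_mul_comp_inv_mul_prod_zero hPC
      (hη.continuous.integrable_of_hasCompactSupport hηc)
      (hψ.continuous_deriv_one.integrable_of_hasCompactSupport hψc.deriv)).add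
    (tendsto_integral_mul_inv_mul_comp_inv_mul_prod hG hGD
      (hη.continuous_deriv_one.integrable_of_hasCompactSupport hηc.deriv)
      (hψ.continuous.integrable_of_hasCompactSupport hψc)
      (fun t ht => hgl t (hpos t ht)) (fun t ht => hgr t (hpos t ht)))
  rw [hηc.integral_Iic_deriv_eq hη, hηc.integral_Ioi_deriv_eq hη, hη_zero, zero_add] at hlim
  have hnonneg := ge_of_tendsto hlim <| eventually_mem_nhdsWithin.mono fun ε (hε : 0 < ε) =>
    h.integral_mul_comp_inv_mul_add_nonneg hP hG hPC hGD hη hηc hη0 hψ hψc hψ0 hψ_nonpos hε.ne'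
  exact hnonneg.trans_eq (integral_congr_ae (Eventually.of_forall fun t => by ring))

theorem rightTrace_le_leftTrace (h : IsWeakSubsolution P G)
    (hP : Measurable (Function.uncurry P)) (hG : Measurable (Function.uncurry G))
    (hPC : ∀ x t, |P x t| ≤ C) (hGD : ∀ x t, |G x t| ≤ D)
    (hgl : ∀ t, 0 < t → Tendsto (fun x => G x t) (𝓝[<] 0) (𝓝 (gl t)))
    (hgr : ∀ t, 0 < t → Tendsto (fun x => G x t) (𝓝[>] 0) (𝓝 (gr t))) :
    ∀ᵐ t, 0 < t → gr t ≤ gl t := by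
  have hmeas {l : Filter ℝ} [l.NeBot] [l.IsCountablyGenerated] {g : ℝ → ℝ}
      (hg : ∀ t, 0 < t → Tendsto (fun x => G x t) l (𝓝 (g t))) :
      AEMeasurable g (volume.restrict (Ioi 0)) :=
    aemeasurable_of_tendsto_metrizable_ae l
      (fun x => (hG.comp (measurable_const.prodMk measurable_id)).aemeasurable)
      ((ae_restrict_mem measurableSet_Ioi).mono hg)
  have hjump : ∀ t ∈ Ioi (0 : ℝ), |gl t - gr t| ≤ D + D := fun t ht =>
    le_of_tendsto ((tendsto_const_nhds.sub (hgr t ht)).abs) <| Eventually.of_forall fun x =>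
      (abs_sub _ _).trans <| add_le_add
        (le_of_tendsto (hgl t ht).abs (Eventually.of_forall fun x => hGD x t)) (hGD x t)
  have hint : LocallyIntegrable ((Ioi 0).indicator fun t => gl t - gr t) := by
    refine (locallyIntegrable_const (D + D)).mono
      ((aemeasurable_indicator_iff measurableSet_Ioi).2
        ((hmeas hgl).sub (hmeas hgr))).aestronglyMeasurable (Eventually.of_forall fun t => ?_)
    rw [norm_indicator_eq_indicator_norm]
    have hD : 0 ≤ D := (abs_nonneg _).trans (hGD 0 0)
    exact (indicator_le' hjump (fun _ _ => add_nonneg hD hD) t).trans (le_abs_self _)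
  have key := ae_nonneg_of_forall_integral_contDiff_mul_nonneg isOpen_Ioi hint
    fun ψ hψ hψc hψ0 hψU => by
      have hψ_nonpos : ∀ t ≤ 0, ψ t = 0 := fun t ht =>
        image_eq_zero_of_notMem_tsupport fun ht' => ht.not_gt (hψU ht')
      refine (h.integral_mul_trace_sub_nonneg hP hG hPC hGD hgl hgr
        (hψ.of_le (by norm_cast)) hψc hψ0 hψ_nonpos).trans_eq
          (integral_congr_ae (Eventually.of_forall fun t => ?_))
      by_cases ht : 0 < t
      · simp only [indicator_of_mem (mem_Ioi.2 ht)]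
      · simp only [hψ_nonpos t (not_lt.1 ht), zero_mul]
  filter_upwards [key] with t ht ht0
  simpa only [indicator_of_mem (mem_Ioi.2 ht0), sub_nonneg] using ht ht0

end IsWeakSubsolution

section Flux

variable {f fl fr : ℝ → ℝ} {A B k p q : ℝ}

/-- The entropy flux `sgn(v - k) (f(v) - f(k))` paired with the Kružkov entropy `|v - k|`. -/
def kruzkovFlux (f : ℝ → ℝ) (k v : ℝ) : ℝ := Real.sign (v - k) * (f v - f k)

theorem kruzkovFlux_of_le (h : k ≤ p) : kruzkovFlux f k p = f p - f k := by
  rcases h.eq_or_lt with rfl | h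
  · simp only [kruzkovFlux, sub_self, mul_zero]
  · rw [kruzkovFlux, Real.sign_of_pos (sub_pos.2 h), one_mul]

theorem kruzkovFlux_of_ge (h : p ≤ k) : kruzkovFlux f k p = f k - f p := by
  rcases h.eq_or_lt with rfl | h
  · simp only [kruzkovFlux, sub_self, mul_zero]
  · rw [kruzkovFlux, Real.sign_of_neg (sub_neg.2 h), neg_one_mul, neg_sub]

theorem kruzkovFlux_eq_max_sub_min (f : ℝ → ℝ) (k v : ℝ) :
    kruzkovFlux f k v = f (max v k) - f (min v k) := by
  rcases le_total v k with h | h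
  · rw [kruzkovFlux_of_ge h, max_eq_right h, min_eq_left h]
  · rw [kruzkovFlux_of_le h, max_eq_left h, min_eq_right h]

theorem continuous_kruzkovFlux (hf : Continuous f) (k : ℝ) : Continuous (kruzkovFlux f k) := by
  simp only [funext (kruzkovFlux_eq_max_sub_min f k)]
  fun_prop

theorem le_of_kruzkovFlux_le (hA : IsMinOn fl (Iic A) A) (hB : IsMinOn fr (Ici B) B)
    (hAB : fl A = fr B) (hpq : fl p = fr q) (h : kruzkovFlux fr B q ≤ kruzkovFlux fl A p) :
    fl A ≤ fl p := by
  rcases le_total p A with hp | hp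
  · exact hA hp
  rcases le_total B q with hq | hq
  · rw [hAB, hpq]
    exact hB hq
  · rw [kruzkovFlux_of_ge hq, kruzkovFlux_of_le hp] at h
    linarith

theorem measurable_dflux {α : Type*} [MeasurableSpace α] {x v : α → ℝ} (hl : Measurable fl)
    (hr : Measurable fr) (hx : Measurable x) (hv : Measurable v) :
    Measurable fun a => dflux fl fr (x a) (v a) :=
  .ite (hx measurableSet_Iio) (hl.comp hv) (hr.comp hv)

theorem exists_forall_abs_dflux_le (hl : Continuous fl) (hr : Continuous fr) (M : ℝ) :
    ∃ C, ∀ x v, |v| ≤ M → |dflux fl fr x v| ≤ C := by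
  obtain ⟨Cl, hCl⟩ := isCompact_Icc.exists_bound_of_continuousOn (s := Icc (-M) M) hl.continuousOn
  obtain ⟨Cr, hCr⟩ := isCompact_Icc.exists_bound_of_continuousOn (s := Icc (-M) M) hr.continuousOn
  refine ⟨max Cl Cr, fun x v hv => ?_⟩
  rw [dflux]
  split_ifs
  · exact le_max_of_le_left (hCl v (abs_le.1 hv))
  · exact le_max_of_le_right (hCr v (abs_le.1 hv))

end Flux

namespace ABSol

variable {fl fr ql qr u0 ζ : ℝ → ℝ} {A B C t T : ℝ} {K : NNReal} (sol : ABSol fl fr A B u0)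
include sol

theorem flux_trace_le (hl : Continuous ql) (hr : Continuous qr) {P : ℝ → ℝ → ℝ}
    (hP : Measurable (Function.uncurry P)) (hPC : ∀ x t, |P x t| ≤ C)
    (h : IsWeakSubsolution P fun x t => dflux ql qr x (sol.u x t)) :
    ∀ᵐ t, 0 < t → qr (sol.up 0 t) ≤ ql (sol.um 0 t) := by
  obtain ⟨M, hM⟩ := sol.bdd
  obtain ⟨D, hD⟩ := exists_forall_abs_dflux_le hl hr M
  refine h.rightTrace_le_leftTrace hP
    (measurable_dflux hl.measurable hr.measurable measurable_fst sol.meas) hPC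
    (fun x t => hD x _ (hM x t)) (fun t ht => ?_) (fun t ht => ?_)
  · refine ((hl.tendsto _).comp (sol.um_spec 0 t ht)).congr' ?_
    filter_upwards [self_mem_nhdsWithin] with x hx using (if_pos hx).symm
  · refine ((hr.tendsto _).comp (sol.up_spec 0 t ht)).congr' ?_
    filter_upwards [self_mem_nhdsWithin] with x hx using (if_neg (not_lt_of_gt hx)).symm

theorem isWeakSubsolution : IsWeakSubsolution sol.u fun x t => dflux fl fr x (sol.u x t) :=
  fun φ hφ hφc _ hφ_nonpos => (sol.weak φ hφ hφc hφ_nonpos).ge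

theorem isWeakSubsolution_neg :
    IsWeakSubsolution (fun x t => -sol.u x t)
      fun x t => dflux (fun v => -fl v) (fun v => -fr v) x (sol.u x t) :=
  fun φ hφ hφc _ hφ_nonpos => by
    have hneg (x v : ℝ) : dflux (fun v => -fl v) (fun v => -fr v) x v = -dflux fl fr x v :=
      (neg_ite _ _ _).symm
    simp only [hneg, neg_mul, ← neg_add, integral_neg, sol.weak φ hφ hφc hφ_nonpos, neg_zero,
      le_refl]

theorem rankineHugoniot (hl : Continuous fl) (hr : Continuous fr) :
    ∀ᵐ t, 0 < t → fl (sol.um 0 t) = fr (sol.up 0 t) := by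
  obtain ⟨M, hM⟩ := sol.bdd
  filter_upwards [sol.flux_trace_le hl hr sol.meas hM sol.isWeakSubsolution,
    sol.flux_trace_le (P := fun x t => -sol.u x t) hl.neg hr.neg sol.meas.neg
      (fun x t => (abs_neg _).trans_le (hM x t)) sol.isWeakSubsolution_neg] with t hle hge ht
  exact (neg_le_neg_iff.1 (hge ht)).antisymm (hle ht)

theorem isWeakSubsolution_interfaceEntropy :
    IsWeakSubsolution (fun x t => |sol.u x t - cAB A B x|)
      fun x t => dflux (kruzkovFlux fl A) (kruzkovFlux fr B) x (sol.u x t) :=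
  fun φ hφ hφc hφ0 hφ_nonpos => by
    refine (sol.interfaceEntropy φ hφ hφc hφ0 hφ_nonpos).trans_eq (integral_congr_ae ?_)
    filter_upwards [Measure.quasiMeasurePreserving_fst.ae (volume.ae_ne 0)] with p hp
    rcases hp.lt_or_gt with hp | hp
    · simp only [dflux, cAB, kruzkovFlux, if_pos hp, if_pos hp.le]
    · simp only [dflux, cAB, kruzkovFlux, if_neg hp.not_gt, if_neg hp.not_ge]

theorem kruzkovFlux_trace_le (hl : Continuous fl) (hr : Continuous fr) :
    ∀ᵐ t, 0 < t → kruzkovFlux fr B (sol.up 0 t) ≤ kruzkovFlux fl A (sol.um 0 t) := by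
  obtain ⟨M, hM⟩ := sol.bdd
  have hc : Measurable (cAB A B) := .ite measurableSet_Iic measurable_const measurable_const
  refine sol.flux_trace_le (P := fun x t => |sol.u x t - cAB A B x|) (C := M + max |A| |B|)
    (continuous_kruzkovFlux hl A) (continuous_kruzkovFlux hr B)
    (sol.meas.sub (hc.comp measurable_fst)).abs (fun x t => ?_)
    sol.isWeakSubsolution_interfaceEntropy
  have hcx : |cAB A B x| ≤ max |A| |B| := by
    rw [cAB]
    split_ifs
    exacts [le_max_left _ _, le_max_right _ _]
  exact (abs_abs _).trans_le ((abs_sub _ _).trans (add_le_add (hM x t) hcx))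

theorem connection_le_flux_trace (hl : Continuous fl) (hr : Continuous fr)
    (hA : IsMinOn fl (Iic A) A) (hB : IsMinOn fr (Ici B) B) (hAB : fl A = fr B) :
    ∀ᵐ t, 0 < t → fl A ≤ fr (sol.up 0 t) := by
  filter_upwards [sol.rankineHugoniot hl hr, sol.kruzkovFlux_trace_le hl hr] with t hRH hK ht
  exact (le_of_kruzkovFlux_le hA hB hAB (hRH ht) (hK ht)).trans_eq (hRH ht)

/-- The integrand `f(α(s)+, u(α(s)+,s)) - α'(s) u(α(s)+,s)` of `F_t(α+, u)`. -/
def fluxDensity (α : ℝ → ℝ) (s : ℝ) : ℝ :=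
  dflux fl fr (α s) (sol.up (α s) s) - deriv α s * sol.up (α s) s

theorem Fplus_eq_integral_fluxDensity (T t : ℝ) (α : ℝ → ℝ) :
    Fplus fl fr T sol t α = ∫ s in t..T, sol.fluxDensity α s :=
  rfl

theorem aemeasurable_up_comp {S : Set ℝ} (hS : MeasurableSet S) (hpos : ∀ s ∈ S, 0 < s)
    (hζ : AEMeasurable ζ (volume.restrict S)) :
    AEMeasurable (fun s => sol.up (ζ s) s) (volume.restrict S) := by
  refine aemeasurable_of_tendsto_metrizable_ae (f := fun ε s => sol.u (ζ s + ε) s) (𝓝[>] 0)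
    (fun ε => sol.meas.comp_aemeasurable ((hζ.add_const ε).prodMk aemeasurable_id)) ?_
  filter_upwards [ae_restrict_mem hS] with s hs
  have hshift : Tendsto (fun ε => ζ s + ε) (𝓝 0) (𝓝 (ζ s)) :=
    (continuous_const_add (ζ s)).tendsto' 0 (ζ s) (add_zero _)
  exact (sol.up_spec (ζ s) s (hpos s hs)).comp <| tendsto_nhdsWithin_iff.2
    ⟨hshift.mono_left nhdsWithin_le_nhds,
      eventually_mem_nhdsWithin.mono fun ε (hε : 0 < ε) => lt_add_of_pos_right (ζ s) hε⟩

theorem intervalIntegrable_fluxDensity (hl : Continuous fl) (hr : Continuous fr)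
    (hζ : LipschitzOnWith K ζ (Icc t T)) (ht : 0 ≤ t) (htT : t ≤ T) :
    IntervalIntegrable (sol.fluxDensity ζ) volume t T := by
  rw [intervalIntegrable_iff_integrableOn_Ioo_of_le htT]
  obtain ⟨M, hM⟩ := sol.bdd
  obtain ⟨C, hC⟩ := exists_forall_abs_dflux_le hl hr M
  have hpos : ∀ s ∈ Ioo t T, 0 < s := fun s hs => ht.trans_lt hs.1
  have hζm : AEMeasurable ζ (volume.restrict (Ioo t T)) :=
    (hζ.continuousOn.mono Ioo_subset_Icc_self).aemeasurable measurableSet_Ioo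
  have hup := sol.aemeasurable_up_comp measurableSet_Ioo hpos hζm
  have hflux : AEMeasurable (fun s => dflux fl fr (ζ s) (sol.up (ζ s) s))
      (volume.restrict (Ioo t T)) :=
    (measurable_dflux hl.measurable hr.measurable measurable_fst
      measurable_snd).comp_aemeasurable (hζm.prodMk hup)
  refine Integrable.of_bound (μ := volume.restrict (Ioo t T))
    (hflux.sub ((measurable_deriv ζ).aemeasurable.mul hup)).aestronglyMeasurable (C + K * M) ?_
  filter_upwards [ae_restrict_mem measurableSet_Ioo] with s hs
  have hupM : |sol.up (ζ s) s| ≤ M :=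
    le_of_tendsto (sol.up_spec (ζ s) s (hpos s hs)).abs (Eventually.of_forall fun y => hM y s)
  have hderiv : |deriv ζ s| ≤ K := norm_deriv_le_of_lipschitzOn (Icc_mem_nhds hs.1 hs.2) hζ
  refine (abs_sub _ _).trans (add_le_add (hC _ _ hupM) ?_)
  rw [abs_mul]
  exact mul_le_mul hderiv hupM (abs_nonneg _) K.2

end ABSol

section Characteristic

variable {fl fr ua0 ub0 ζ : ℝ → ℝ} {T A B A' B' γ s : ℝ}

theorem ABSol.fluxDensity_le_of_neg (hfl : ConvexOn ℝ univ fl) (hdl : Differentiable ℝ fl)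
    (usol : ABSol fl fr A B ua0) (ustar : ABSol fl fr A' B' ub0) (hζs : ζ s < 0)
    (hslope : deriv ζ s = deriv fl (ustar.up (ζ s) s)) :
    ustar.fluxDensity ζ s ≤ usol.fluxDensity ζ s := by
  have h := tangent_le_of_convexOn hfl (mem_univ _) (mem_univ (usol.up (ζ s) s))
    (hdl (ustar.up (ζ s) s)).hasDerivAt
  simp only [ABSol.fluxDensity, dflux, if_pos hζs, hslope]
  linarith

theorem ABSol.fluxDensity_le_of_pos (hfr : ConvexOn ℝ univ fr) (hdr : Differentiable ℝ fr)
    (usol : ABSol fl fr A B ua0) (ustar : ABSol fl fr A' B' ub0) (hζs : 0 < ζ s)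
    (hslope : deriv ζ s = deriv fr (ustar.up (ζ s) s)) :
    ustar.fluxDensity ζ s ≤ usol.fluxDensity ζ s := by
  have h := tangent_le_of_convexOn hfr (mem_univ _) (mem_univ (usol.up (ζ s) s))
    (hdr (ustar.up (ζ s) s)).hasDerivAt
  simp only [ABSol.fluxDensity, dflux, if_neg hζs.not_gt, hslope]
  linarith

theorem ABSol.fluxDensity_of_eq_zero (sol : ABSol fl fr A B ua0) (hζs : ζ s = 0)
    (hζ' : deriv ζ s = 0) : sol.fluxDensity ζ s = fr (sol.up 0 s) := by
  simp only [ABSol.fluxDensity, dflux, hζs, hζ', lt_irrefl, if_false, zero_mul, sub_zero]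

theorem IsABgic.fluxDensity_le (hfl : ConvexOn ℝ univ fl) (hfr : ConvexOn ℝ univ fr)
    (hdl : Differentiable ℝ fl) (hdr : Differentiable ℝ fr)
    {usol : ABSol fl fr A B ua0} {ustar : ABSol fl fr A' B' ub0}
    (husol : ∀ᵐ s, 0 < s → γ ≤ fr (usol.up 0 s)) (hζ : IsABgic T fl fr γ ustar ζ) :
    ∀ᵐ s ∂volume.restrict (Icc 0 T), ustar.fluxDensity ζ s ≤ usol.fluxDensity ζ s := by
  filter_upwards [hζ.2, ae_restrict_of_ae husol, ae_restrict_of_ae (ae_deriv_eq_zero_of_eq ζ 0),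
    ae_restrict_of_ae (volume.ae_ne 0), ae_restrict_mem measurableSet_Icc]
    with s ⟨hneg, hpos, hzero⟩ hγ hderiv hs0 hs
  rcases lt_trichotomy (ζ s) 0 with h | h | h
  · exact ABSol.fluxDensity_le_of_neg hfl hdl usol ustar h ((hneg h).1.deriv.trans (hneg h).2)
  · rw [ustar.fluxDensity_of_eq_zero h (hderiv h), usol.fluxDensity_of_eq_zero h (hderiv h),
      (hzero h).2]
    exact hγ (hs.1.lt_of_ne' hs0)
  · exact ABSol.fluxDensity_le_of_pos hfr hdr usol ustar h ((hpos h).1.deriv.trans (hpos h).2)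

end Characteristic

theorem flux_functional_inequality_general {T A B A' B' : ℝ} {fl fr ua0 ub0 : ℝ → ℝ}
    (hfl : ConvexOn ℝ univ fl) (hfr : ConvexOn ℝ univ fr)
    (hdl : Differentiable ℝ fl) (hdr : Differentiable ℝ fr)
    (hAB : fl A = fr B) (hA : deriv fl A ≤ 0) (hB : 0 ≤ deriv fr B) (hA' : fl A' ≤ fl A)
    (usol : ABSol fl fr A B ua0) (ustar : ABSol fl fr A' B' ub0)
    {ζ : ℝ → ℝ} (hζ : IsABgic T fl fr (fl A') ustar ζ) :
    ∀ t ∈ Icc (0 : ℝ) T, Fplus fl fr T ustar t ζ ≤ Fplus fl fr T usol t ζ := by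
  intro t ht
  have hminA := isMinOn_inter_Iic_of_convexOn hfl (mem_univ A) (hdl A).hasDerivAt hA
  have hminB := isMinOn_inter_Ici_of_convexOn hfr (mem_univ B) (hdr B).hasDerivAt hB
  rw [univ_inter] at hminA hminB
  have hγ : ∀ᵐ s, 0 < s → fl A' ≤ fr (usol.up 0 s) :=
    (usol.connection_le_flux_trace hdl.continuous hdr.continuous hminA hminB hAB).mono
      fun s hs h => hA'.trans (hs h)
  have hsub : Icc t T ⊆ Icc 0 T := Icc_subset_Icc_left ht.1
  obtain ⟨K, hK⟩ := hζ.1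
  simp only [ABSol.Fplus_eq_integral_fluxDensity]
  exact intervalIntegral.integral_mono_ae_restrict ht.2
    (ustar.intervalIntegrable_fluxDensity hdl.continuous hdr.continuous (hK.mono hsub) ht.1 ht.2)
    (usol.intervalIntegrable_fluxDensity hdl.continuous hdr.continuous (hK.mono hsub) ht.1 ht.2)
    (ae_restrict_of_ae_restrict_of_subset hsub (hζ.fluxDensity_le hfl hfr hdl hdr hγ))

/-- along any AB-genuine/interface characteristic `ζ` of `u^*`,
the flux functional of any other AB-entropy solution `u` dominates that of
`u^*` (first part of Lemma 4.8 of the paper). -/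
theorem flux_functional_inequality
    {T a θl θr A B : ℝ} {fl fr : ℝ → ℝ}
    (hT : 0 < T)
    (hflC : ContDiff ℝ 2 fl) (hfrC : ContDiff ℝ 2 fr)
    (ha : 0 < a)
    (hfl2 : ∀ w : ℝ, a ≤ deriv (deriv fl) w)
    (hfr2 : ∀ w : ℝ, a ≤ deriv (deriv fr) w)
    (hf0 : fl 0 = fr 0) (hf1 : fl 1 = fr 1)
    (hθl : deriv fl θl = 0) (hθr : deriv fr θr = 0)
    (hθl0 : 0 ≤ θl) (hθr1 : θr ≤ 1)
    (hAB : fl A = fr B) (hA' : deriv fl A ≤ 0) (hB' : 0 ≤ deriv fr B)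
    {ua0 ub0 : ℝ → ℝ} (hua0 : IsLinf ua0) (hub0 : IsLinf ub0)
    (usol : ABSol fl fr A B ua0) (ustar : ABSol fl fr A B ub0)
    (x : ℝ) (ζ : ℝ → ℝ) (hζ : ζ ∈ charSet T fl fr (fl A) ustar x) :
    ∀ t ∈ Icc (0:ℝ) T,
      Fplus fl fr T ustar t ζ ≤ Fplus fl fr T usol t ζ := by
  have hdl : Differentiable ℝ fl := hflC.differentiable two_ne_zero
  have hdr : Differentiable ℝ fr := hfrC.differentiable two_ne_zero
  have hfl : ConvexOn ℝ univ fl := convexOn_univ_of_deriv2_nonneg hdl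
    hflC.differentiable_deriv_two fun w => ha.le.trans (hfl2 w)
  have hfr : ConvexOn ℝ univ fr := convexOn_univ_of_deriv2_nonneg hdr
    hfrC.differentiable_deriv_two fun w => ha.le.trans (hfr2 w)
  exact flux_functional_inequality_general hfl hfr hdl hdr hAB hA' hB' le_rfl usol ustar hζ.1
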